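/- arXiv:2009.11640 — 4 statements merged into one kernel-verified Lean document; each statement's English description precedes it below -/
import Mathlib

section
/- Dempster's rule of combination is associative: let m₁, m₂, m₃ be basic belief assignments on a finite nonempty frame Θ such that the conflict of (m₁, m₂) is < 1, the conflict of (m₁ ⊕ m₂, m₃) is < 1, the conflict of (m₂, m₃) is < 1, and the conflict of (m₁, m₂ ⊕ m₃) is < 1. Then (m₁ ⊕ m₂) ⊕ m₃ = m₁ ⊕ (m₂ ⊕ m₃). -/
open Finset

/-- The conflict `k = Σ_{X ∩ Y = ∅} m₁(X)·m₂(Y)` of two basic belief assignments on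
the frame `Θ`. -/
def conflict {α : Type*} [DecidableEq α] (Θ : Finset α) (m₁ m₂ : Finset α → ℝ) : ℝ :=
  ∑ X ∈ Θ.powerset, ∑ Y ∈ Θ.powerset, if X ∩ Y = ∅ then m₁ X * m₂ Y else 0

/-- Dempster's rule of combination on the frame `Θ`:
`(m₁ ⊕ m₂)(A) = (1−k)⁻¹ · Σ_{X ∩ Y = A} m₁(X)·m₂(Y)` for `A ≠ ∅`, and
`(m₁ ⊕ m₂)(∅) = 0`. -/
noncomputable def dempster {α : Type*} [DecidableEq α] (Θ : Finset α) (m₁ m₂ : Finset α → ℝ)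
    (A : Finset α) : ℝ :=
  if A = ∅ then 0 else
    (1 - conflict Θ m₁ m₂)⁻¹ *
      ∑ X ∈ Θ.powerset, ∑ Y ∈ Θ.powerset, if X ∩ Y = A then m₁ X * m₂ Y else 0

/-- The unnormalized conjunctive combination `A ↦ Σ_{X ∩ Y = A} m₁(X)·m₂(Y)` on the frame `Θ`. -/
def conjunctive {α : Type*} [DecidableEq α] (Θ : Finset α) (m₁ m₂ : Finset α → ℝ)
    (A : Finset α) : ℝ :=
  ∑ X ∈ Θ.powerset, ∑ Y ∈ Θ.powerset, if X ∩ Y = A then m₁ X * m₂ Y else 0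

section

variable {α : Type*} [DecidableEq α] (Θ : Finset α)

theorem conjunctive_comm (m₁ m₂ : Finset α → ℝ) :
    conjunctive Θ m₁ m₂ = conjunctive Θ m₂ m₁ := by
  funext A
  unfold conjunctive
  rw [sum_comm]
  simp only [inter_comm, mul_comm]

theorem conflict_comm (m₁ m₂ : Finset α → ℝ) : conflict Θ m₁ m₂ = conflict Θ m₂ m₁ :=
  congrFun (conjunctive_comm Θ m₁ m₂) ∅

theorem dempster_of_ne_empty (m₁ m₂ : Finset α → ℝ) {A : Finset α} (hA : A ≠ ∅) :
    dempster Θ m₁ m₂ A = (1 - conflict Θ m₁ m₂)⁻¹ * conjunctive Θ m₁ m₂ A :=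
  if_neg hA

theorem dempster_comm (m₁ m₂ : Finset α → ℝ) : dempster Θ m₁ m₂ = dempster Θ m₂ m₁ := by
  funext A
  by_cases hA : A = ∅
  · simp [dempster, hA]
  · rw [dempster_of_ne_empty Θ _ _ hA, dempster_of_ne_empty Θ _ _ hA, conjunctive_comm,
      conflict_comm]

theorem sum_conjunctive_mul (m₁ m₂ g : Finset α → ℝ) :
    ∑ W ∈ Θ.powerset, conjunctive Θ m₁ m₂ W * g W =
      ∑ X ∈ Θ.powerset, ∑ Y ∈ Θ.powerset, m₁ X * m₂ Y * g (X ∩ Y) := by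
  simp only [conjunctive, sum_mul]
  rw [sum_comm]
  refine sum_congr rfl fun X hX => ?_
  rw [sum_comm]
  refine sum_congr rfl fun Y _ => ?_
  have hXY : X ∩ Y ∈ Θ.powerset :=
    mem_powerset.2 (inter_subset_left.trans (mem_powerset.1 hX))
  simp only [ite_mul, zero_mul, sum_ite_eq, if_pos hXY]

theorem sum_conjunctive (m₁ m₂ : Finset α → ℝ) :
    ∑ W ∈ Θ.powerset, conjunctive Θ m₁ m₂ W =
      (∑ X ∈ Θ.powerset, m₁ X) * ∑ Y ∈ Θ.powerset, m₂ Y := by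
  simpa [sum_mul_sum] using sum_conjunctive_mul Θ m₁ m₂ 1

theorem conjunctive_conjunctive (m₁ m₂ m₃ : Finset α → ℝ) (A : Finset α) :
    conjunctive Θ (conjunctive Θ m₁ m₂) m₃ A =
      ∑ X ∈ Θ.powerset, ∑ Y ∈ Θ.powerset, ∑ Z ∈ Θ.powerset,
        if X ∩ Y ∩ Z = A then m₁ X * m₂ Y * m₃ Z else 0 := by
  have h := sum_conjunctive_mul Θ m₁ m₂ fun W => ∑ Z ∈ Θ.powerset, if W ∩ Z = A then m₃ Z else 0
  simp only [mul_sum, mul_ite, mul_zero] at h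
  exact h

theorem conjunctive_rotate (m₁ m₂ m₃ : Finset α → ℝ) :
    conjunctive Θ (conjunctive Θ m₁ m₂) m₃ = conjunctive Θ (conjunctive Θ m₂ m₃) m₁ := by
  funext A
  rw [conjunctive_conjunctive, conjunctive_conjunctive, sum_comm]
  refine sum_congr rfl fun Y _ => ?_
  rw [sum_comm]
  refine sum_congr rfl fun Z _ => sum_congr rfl fun X _ => ?_
  rw [inter_assoc, inter_comm X, mul_assoc, mul_comm (m₁ X)]

theorem one_sub_conflict {m₁ m₂ : Finset α → ℝ} (h₁ : ∑ X ∈ Θ.powerset, m₁ X = 1)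
    (h₂ : ∑ X ∈ Θ.powerset, m₂ X = 1) :
    1 - conflict Θ m₁ m₂ = ∑ B ∈ Θ.powerset.erase ∅, conjunctive Θ m₁ m₂ B := by
  have h := add_sum_erase _ (conjunctive Θ m₁ m₂) (empty_mem_powerset Θ)
  rw [sum_conjunctive, h₁, h₂, mul_one] at h
  exact sub_eq_of_eq_add' h.symm

theorem sum_dempster {m₁ m₂ : Finset α → ℝ} (h₁ : ∑ X ∈ Θ.powerset, m₁ X = 1)
    (h₂ : ∑ X ∈ Θ.powerset, m₂ X = 1) (hk : conflict Θ m₁ m₂ < 1) :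
    ∑ X ∈ Θ.powerset, dempster Θ m₁ m₂ X = 1 := by
  rw [← add_sum_erase _ _ (empty_mem_powerset Θ),
    sum_congr rfl fun B hB => dempster_of_ne_empty Θ m₁ m₂ (ne_of_mem_erase hB),
    ← mul_sum, ← one_sub_conflict Θ h₁ h₂, inv_mul_cancel₀ (sub_pos.2 hk).ne']
  simp [dempster]

theorem conjunctive_dempster (m₁ m₂ m₃ : Finset α → ℝ) {A : Finset α} (hA : A ≠ ∅) :
    conjunctive Θ (dempster Θ m₁ m₂) m₃ A =
      (1 - conflict Θ m₁ m₂)⁻¹ * conjunctive Θ (conjunctive Θ m₁ m₂) m₃ A := by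
  simp only [conjunctive.eq_def Θ _ m₃, mul_sum]
  refine sum_congr rfl fun X _ => sum_congr rfl fun Y _ => ?_
  split_ifs with h
  · have hX : X ≠ ∅ := by
      rintro rfl
      exact hA (by rw [← h, empty_inter])
    rw [dempster_of_ne_empty Θ _ _ hX, mul_assoc]
  · rw [mul_zero]

/-- Iterating Dempster's rule amounts to normalizing the iterated conjunctive combination once. -/
theorem dempster_dempster {m₁ m₂ m₃ : Finset α → ℝ} (h₁ : ∑ X ∈ Θ.powerset, m₁ X = 1)
    (h₂ : ∑ X ∈ Θ.powerset, m₂ X = 1) (h₃ : ∑ X ∈ Θ.powerset, m₃ X = 1)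
    (hk : conflict Θ m₁ m₂ < 1) {A : Finset α} (hA : A ≠ ∅) :
    dempster Θ (dempster Θ m₁ m₂) m₃ A =
      (∑ B ∈ Θ.powerset.erase ∅, conjunctive Θ (conjunctive Θ m₁ m₂) m₃ B)⁻¹ *
        conjunctive Θ (conjunctive Θ m₁ m₂) m₃ A := by
  have hc : 1 - conflict Θ m₁ m₂ ≠ 0 := (sub_pos.2 hk).ne'
  rw [dempster_of_ne_empty Θ _ _ hA, one_sub_conflict Θ (sum_dempster Θ h₁ h₂ hk) h₃,
    sum_congr rfl fun B hB => conjunctive_dempster Θ m₁ m₂ m₃ (ne_of_mem_erase hB),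
    ← mul_sum, conjunctive_dempster Θ _ _ _ hA, mul_inv, inv_inv, mul_mul_mul_comm,
    mul_inv_cancel₀ hc, one_mul]

end

/-- Dempster's rule is associative: for BBAs `m₁, m₂, m₃` on a finite nonempty frame `Θ`,
if the conflicts of `(m₁, m₂)`, `(m₁ ⊕ m₂, m₃)`, `(m₂, m₃)` and `(m₁, m₂ ⊕ m₃)` are
all `< 1`, then `(m₁ ⊕ m₂) ⊕ m₃ = m₁ ⊕ (m₂ ⊕ m₃)`. -/
theorem dempster_assoc
    {α : Type*} [DecidableEq α] (Θ : Finset α) (hΘ : Θ.Nonempty)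
    (m₁ m₂ m₃ : Finset α → ℝ)
    (h₁nonneg : ∀ X, 0 ≤ m₁ X) (h₁empty : m₁ ∅ = 0)
    (h₁sum : ∑ A ∈ Θ.powerset, m₁ A = 1)
    (h₂nonneg : ∀ X, 0 ≤ m₂ X) (h₂empty : m₂ ∅ = 0)
    (h₂sum : ∑ A ∈ Θ.powerset, m₂ A = 1)
    (h₃nonneg : ∀ X, 0 ≤ m₃ X) (h₃empty : m₃ ∅ = 0)
    (h₃sum : ∑ A ∈ Θ.powerset, m₃ A = 1)
    (hk₁₂ : conflict Θ m₁ m₂ < 1)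
    (hk₁₂₃ : conflict Θ (dempster Θ m₁ m₂) m₃ < 1)
    (hk₂₃ : conflict Θ m₂ m₃ < 1)
    (hk₁₂₃' : conflict Θ m₁ (dempster Θ m₂ m₃) < 1) :
    dempster Θ (dempster Θ m₁ m₂) m₃ = dempster Θ m₁ (dempster Θ m₂ m₃) := by
  funext A
  by_cases hA : A = ∅
  · simp [dempster, hA]
  · rw [dempster_comm Θ m₁ (dempster Θ m₂ m₃), dempster_dempster Θ h₁sum h₂sum h₃sum hk₁₂ hA,
      dempster_dempster Θ h₂sum h₃sum h₁sum hk₂₃ hA, conjunctive_rotate]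
end

section
/- Let Θ be a finite nonempty frame, ι a nonempty finite index set, and for each i ∈ ι let m_i be the simple basic belief assignment with focal set B'_i, where ∅ ≠ B'_i ⊊ Θ and weight a_i ∈ (0,1). Assume the sets B'_i are pairwise distinct and form an antichain under inclusion (no B'_i is contained in another B'_j for i ≠ j). Let m be their Dempster combination and k the total conflict. Then for each i ∈ ι, m(B'_i) = (1−k)⁻¹ · a_i · Π_{j ≠ i} (1 − a_j); that is, no intersection of two or more distinct subbases can coincide with any B'_i, so the only term contributing to m(B'_i) is S = {i}. -/
open Finset

/-- The intersection `⋂_{i ∈ S} B'_i` taken within the frame `Θ`, with the convention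
that the empty intersection (`S = ∅`) is the whole frame `Θ`. -/
def interS {α ι : Type*} [DecidableEq α] (Θ : Finset α) (B : ι → Finset α)
    (S : Finset ι) : Finset α :=
  Θ.filter (fun x => ∀ i ∈ S, x ∈ B i)

/-- The conjunctive weight `Π_{i ∈ S} a_i · Π_{i ∉ S} (1 − a_i)` of a subfamily `S` when
combining the simple BBAs with focal sets `B'_i` and weights `a_i`. -/
def weight {ι : Type*} [Fintype ι] [DecidableEq ι] (a : ι → ℝ) (S : Finset ι) : ℝ :=
  (∏ i ∈ S, a i) * ∏ i ∈ Finset.univ \ S, (1 - a i)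

/-- The total conflict `k` of the conjunctive combination of the simple BBAs with focal
sets `B'_i ⊆ Θ` and weights `a_i`: the total weight of the subfamilies with empty
intersection. -/
def totalConflict {α ι : Type*} [DecidableEq α] [Fintype ι] [DecidableEq ι]
    (Θ : Finset α) (B : ι → Finset α) (a : ι → ℝ) : ℝ :=
  ∑ S ∈ (Finset.univ : Finset ι).powerset,
    if interS Θ B S = ∅ then weight a S else 0

/-- The Dempster combination of the simple BBAs with focal sets `B'_i ⊆ Θ` and weights
`a_i`: `m(X) = (1−k)⁻¹ · Σ_{S : ⋂_{i ∈ S} B'_i = X} Π_{i ∈ S} a_i · Π_{i ∉ S} (1 − a_i)`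
for `X ≠ ∅`, and `m(∅) = 0`. -/
noncomputable def dempsterCombo {α ι : Type*} [DecidableEq α] [Fintype ι] [DecidableEq ι]
    (Θ : Finset α) (B : ι → Finset α) (a : ι → ℝ) (X : Finset α) : ℝ :=
  if X = ∅ then 0 else
    (1 - totalConflict Θ B a)⁻¹ *
      ∑ S ∈ (Finset.univ : Finset ι).powerset,
        if interS Θ B S = X then weight a S else 0

theorem interS_singleton {α ι : Type*} [DecidableEq α] {Θ : Finset α} {B : ι → Finset α}
    {i : ι} (hi : B i ⊆ Θ) : interS Θ B {i} = B i := by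
  ext x
  simpa [interS] using @hi x

theorem interS_subset_of_mem {α ι : Type*} [DecidableEq α] (Θ : Finset α) (B : ι → Finset α)
    {S : Finset ι} {j : ι} (hj : j ∈ S) : interS Θ B S ⊆ B j :=
  fun _ hx => (Finset.mem_filter.1 hx).2 j hj

/-- For an antichain of proper subsets of the frame, `{i}` is the only subfamily whose
intersection is `B i`. -/
theorem interS_eq_iff_eq_singleton {α ι : Type*} [DecidableEq α] {Θ : Finset α}
    {B : ι → Finset α} (hB : ∀ i j, i ≠ j → ¬ B i ⊆ B j) {i : ι} (hi : B i ⊂ Θ)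
    {S : Finset ι} : interS Θ B S = B i ↔ S = {i} := by
  refine ⟨fun h => ?_, fun h => h ▸ interS_singleton hi.subset⟩
  refine Finset.eq_singleton_iff_nonempty_unique_mem.2 ⟨?_, fun j hj => ?_⟩
  · rw [Finset.nonempty_iff_ne_empty]
    rintro rfl
    exact hi.ne (by simpa [interS] using h.symm)
  · by_contra hji
    exact hB i j (Ne.symm hji) (h ▸ interS_subset_of_mem Θ B hj)

/-- If the nonempty proper focal sets `B'_i ⊊ Θ` are pairwise distinct and form an
antichain under inclusion, then in the Dempster combination the only subfamily whose
intersection is `B'_i` is `S = {i}`, hence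
`m(B'_i) = (1−k)⁻¹ · a_i · Π_{j ≠ i} (1 − a_j)`. -/
theorem dempsterCombo_single
    {α ι : Type*} [DecidableEq α] [Fintype ι] [DecidableEq ι] [Nonempty ι]
    (Θ : Finset α) (hΘ : Θ.Nonempty)
    (B : ι → Finset α) (hBne : ∀ i, (B i).Nonempty) (hBsub : ∀ i, B i ⊂ Θ)
    (hdistinct : ∀ i j, i ≠ j → B i ≠ B j)
    (hantichain : ∀ i j, i ≠ j → ¬ B i ⊆ B j)
    (a : ι → ℝ) (ha : ∀ i, 0 < a i ∧ a i < 1) (i : ι) :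
    dempsterCombo Θ B a (B i) =
      (1 - totalConflict Θ B a)⁻¹ *
        (a i * ∏ j ∈ Finset.univ.erase i, (1 - a j)) := by
  simp [dempsterCombo, (hBne i).ne_empty, interS_eq_iff_eq_singleton hantichain (hBsub i),
    weight, Finset.sdiff_singleton_eq_erase]
end

section
/- Let B be a finite set and let (B'_i)_{i ∈ ι} be a nonempty finite family of pairwise distinct subsets of B that form an antichain under inclusion, with 0 < |B'_i| < |B| for every i. Give each B'_i the simple basic belief assignment with weight a_i = |B'_i|/|B|, and let m be the Dempster combination of these simple BBAs over the frame B. Then for all indices i, j: |B'_i| = |B'_j| if and only if m(B'_i) = m(B'_j), and |B'_i| > |B'_j| if and only if m(B'_i) > m(B'_j); i.e., the order among the combined belief masses m(B'_i) respects the order among the cardinalities |B'_i|. -/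
open Finset

/-- For an antichain of proper subsets of the frame, `B' i` arises as the intersection of the
subfamily `{i}` only. -/
theorem interS_eq_focal_iff {α ι : Type*} [DecidableEq α] {B : Finset α} {B' : ι → Finset α}
    (hBsub : ∀ i, B' i ⊆ B) (hantichain : ∀ i j, i ≠ j → ¬ B' i ⊆ B' j) {i : ι}
    (hne : B' i ≠ B) (S : Finset ι) : interS B B' S = B' i ↔ S = {i} := by
  constructor
  · intro h
    refine Finset.eq_singleton_iff_nonempty_unique_mem.2 ⟨?_, fun k hk => ?_⟩
    · rw [Finset.nonempty_iff_ne_empty]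
      rintro rfl
      exact hne (by simpa [interS] using h.symm)
    · by_contra hki
      refine hantichain i k (Ne.symm hki) fun x hx => ?_
      rw [← h] at hx
      exact (Finset.mem_filter.1 hx).2 k hk
  · rintro rfl
    ext x
    simpa [interS] using fun hx => hBsub i hx

theorem weight_pos {ι : Type*} [Fintype ι] [DecidableEq ι] {a : ι → ℝ}
    (h0 : ∀ i, 0 < a i) (h1 : ∀ i, a i < 1) (S : Finset ι) : 0 < weight a S :=
  mul_pos (Finset.prod_pos fun i _ => h0 i) (Finset.prod_pos fun i _ => sub_pos.2 (h1 i))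

theorem sum_weight {ι : Type*} [Fintype ι] [DecidableEq ι] (a : ι → ℝ) :
    ∑ S ∈ (Finset.univ : Finset ι).powerset, weight a S = 1 := by
  simp only [weight]
  rw [← Finset.prod_add]
  simp

theorem weight_singleton_mul {ι : Type*} [Fintype ι] [DecidableEq ι] (a : ι → ℝ) (i : ι) :
    weight a {i} * (1 - a i) = a i * ∏ l, (1 - a l) := by
  rw [weight, Finset.prod_singleton, mul_assoc, Finset.sdiff_singleton_eq_erase,
    Finset.prod_erase_mul _ _ (Finset.mem_univ i)]

/-- The conflict is less than `1`, since the empty subfamily has positive weight and intersection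
the whole frame. -/
theorem totalConflict_lt_one {α ι : Type*} [DecidableEq α] [Fintype ι] [DecidableEq ι]
    {B : Finset α} (hB : B ≠ ∅) (B' : ι → Finset α) {a : ι → ℝ}
    (h0 : ∀ i, 0 < a i) (h1 : ∀ i, a i < 1) : totalConflict B B' a < 1 := by
  rw [← sum_weight a, totalConflict]
  refine Finset.sum_lt_sum (fun S _ => ?_) ⟨∅, by simp, ?_⟩
  · split_ifs
    exacts [le_rfl, (weight_pos h0 h1 S).le]
  · have h : interS B B' ∅ ≠ ∅ := by simpa [interS] using hB
    rw [if_neg h]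
    exact weight_pos h0 h1 ∅

theorem weight_singleton_lt {ι : Type*} [Fintype ι] [DecidableEq ι] {a : ι → ℝ}
    (h0 : ∀ i, 0 < a i) (h1 : ∀ i, a i < 1) {i j : ι} (h : a i < a j) :
    weight a {i} < weight a {j} := by
  have hP : 0 < ∏ l, (1 - a l) := Finset.prod_pos fun l _ => sub_pos.2 (h1 l)
  rw [eq_div_of_mul_eq (sub_pos.2 (h1 i)).ne' (weight_singleton_mul a i),
    eq_div_of_mul_eq (sub_pos.2 (h1 j)).ne' (weight_singleton_mul a j)]
  have hj := sub_pos.2 (h1 j)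
  have hjP := mul_nonneg (h0 j).le hP.le
  gcongr

theorem weight_singleton_congr {ι : Type*} [Fintype ι] [DecidableEq ι] {a : ι → ℝ}
    (h1 : ∀ i, a i < 1) {i j : ι} (h : a i = a j) : weight a {i} = weight a {j} := by
  rw [eq_div_of_mul_eq (sub_pos.2 (h1 i)).ne' (weight_singleton_mul a i),
    eq_div_of_mul_eq (sub_pos.2 (h1 j)).ne' (weight_singleton_mul a j), h]

/-- Let `(B'_i)` be pairwise distinct subsets of the finite frame `B` forming an
antichain under inclusion, with `0 < |B'_i| < |B|`, each carrying the simple BBA with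
weight `a_i = |B'_i|/|B|`, and let `m` be their Dempster combination. Then the order
among the combined masses `m(B'_i)` respects the order among the cardinalities:
`|B'_i| = |B'_j| ↔ m(B'_i) = m(B'_j)` and `|B'_i| > |B'_j| ↔ m(B'_i) > m(B'_j)`. -/
theorem dempsterCombo_mass_order_card
    {α ι : Type*} [DecidableEq α] [Fintype ι] [DecidableEq ι] [Nonempty ι]
    (B : Finset α) (B' : ι → Finset α) (hBsub : ∀ i, B' i ⊆ B)
    (hdistinct : ∀ i j, i ≠ j → B' i ≠ B' j)
    (hantichain : ∀ i j, i ≠ j → ¬ B' i ⊆ B' j)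
    (hcard : ∀ i, 0 < (B' i).card ∧ (B' i).card < B.card)
    (a : ι → ℝ) (ha : ∀ i, a i = ((B' i).card : ℝ) / (B.card : ℝ))
    (i j : ι) :
    ((B' i).card = (B' j).card ↔ dempsterCombo B B' a (B' i) = dempsterCombo B B' a (B' j)) ∧
    ((B' i).card > (B' j).card ↔ dempsterCombo B B' a (B' i) > dempsterCombo B B' a (B' j)) := by
  have hB : (0 : ℝ) < B.card := by exact_mod_cast (hcard i).1.trans (hcard i).2
  have h0 : ∀ l, 0 < a l := fun l => by
    rw [ha]
    exact div_pos (by exact_mod_cast (hcard l).1) hB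
  have h1 : ∀ l, a l < 1 := fun l => by
    rw [ha, div_lt_one hB]
    exact_mod_cast (hcard l).2
  have hBne : B ≠ ∅ := by
    rintro rfl
    simp at hB
  have hc : 0 < (1 - totalConflict B B' a)⁻¹ :=
    inv_pos.2 (sub_pos.2 (totalConflict_lt_one hBne B' h0 h1))
  have hm : ∀ l, dempsterCombo B B' a (B' l) =
      (1 - totalConflict B B' a)⁻¹ * weight a {l} := fun l => by
    have hne : B' l ≠ B := fun h => (hcard l).2.ne (congrArg Finset.card h)
    rw [dempsterCombo, if_neg (Finset.card_pos.1 (hcard l).1).ne_empty]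
    simp [interS_eq_focal_iff hBsub hantichain hne]
  have hlt : ∀ k l, (B' k).card < (B' l).card →
      dempsterCombo B B' a (B' k) < dempsterCombo B B' a (B' l) := fun k l h => by
    rw [hm, hm]
    refine mul_lt_mul_of_pos_left (weight_singleton_lt h0 h1 ?_) hc
    rw [ha, ha]
    gcongr
  have heq : (B' i).card = (B' j).card →
      dempsterCombo B B' a (B' i) = dempsterCombo B B' a (B' j) := fun h => by
    have hij : a i = a j := by rw [ha i, ha j, h]
    rw [hm, hm, weight_singleton_congr h1 hij]
  rcases lt_trichotomy (B' i).card (B' j).card with h | h | h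
  · have := hlt i j h
    exact ⟨iff_of_false h.ne this.ne, iff_of_false h.not_gt this.not_gt⟩
  · have := heq h
    exact ⟨iff_of_true h this, iff_of_false h.not_gt this.not_gt⟩
  · have := hlt j i h
    exact ⟨iff_of_false h.ne' this.ne', iff_of_true h this⟩
end

section
/- Let B be a finite set and let (B'_i)_{i ∈ ι} be a nonempty finite family of pairwise distinct nonempty proper subsets of B that are pairwise disjoint (B'_i ∩ B'_j = ∅ for all i ≠ j). Give each B'_i the simple basic belief assignment with some weight a_i ∈ (0,1) and let m be the Dempster combination over the frame B, with credibility function Bel. Then for every i ∈ ι, Bel(B'_i) = m(B'_i): when all pairwise intersections of the subbases are empty, the combined BBA has no focal element strictly inside any B'_i, so the credibility of each subbase equals its combined mass. -/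
open Finset

/-- The credibility (belief) function of a basic belief assignment `m`:
`Bel(A) = Σ_{X ⊆ A, X ≠ ∅} m(X)`. -/
noncomputable def credibility {α : Type*} [DecidableEq α] (m : Finset α → ℝ)
    (A : Finset α) : ℝ :=
  ∑ X ∈ A.powerset.filter (fun X => X ≠ ∅), m X

/-- For pairwise disjoint `B' j ⊂ Θ`, a nonempty intersection of a subfamily that lies inside
`B' i` is `B' i` itself. -/
theorem interS_eq_of_subset {α ι : Type*} [DecidableEq α] {Θ : Finset α} {B' : ι → Finset α}
    (hproper : ∀ i, B' i ⊂ Θ) (hdisj : ∀ i j, i ≠ j → B' i ∩ B' j = ∅) {S : Finset ι} {i : ι}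
    (hS : (interS Θ B' S).Nonempty) (hsub : interS Θ B' S ⊆ B' i) :
    interS Θ B' S = B' i := by
  obtain ⟨x, hx⟩ := hS
  have hxi := hsub hx
  have hmem : ∀ j ∈ S, j = i := by
    intro j hj
    by_contra hji
    have hxj : x ∈ B' j := (Finset.mem_filter.1 hx).2 j hj
    have hx' : x ∈ B' j ∩ B' i := Finset.mem_inter.2 ⟨hxj, hxi⟩
    simp [hdisj j i hji] at hx'
  refine hsub.antisymm fun y hy => Finset.mem_filter.2 ⟨(hproper i).1 hy, fun j hj => ?_⟩
  rwa [hmem j hj]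

/-- The Dempster combination of simple BBAs with pairwise disjoint focal sets has no focal element
strictly inside one of these sets. -/
theorem dempsterCombo_eq_zero_of_ssubset {α ι : Type*} [DecidableEq α] [Fintype ι] [DecidableEq ι]
    {Θ : Finset α} {B' : ι → Finset α} (hproper : ∀ i, B' i ⊂ Θ)
    (hdisj : ∀ i j, i ≠ j → B' i ∩ B' j = ∅) (a : ι → ℝ) {X : Finset α} {i : ι}
    (hX : X ⊂ B' i) : dempsterCombo Θ B' a X = 0 := by
  unfold dempsterCombo
  split_ifs with h
  · rfl
  · rw [Finset.sum_eq_zero, mul_zero]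
    refine fun S _ => if_neg ?_
    rintro rfl
    exact hX.ne (interS_eq_of_subset hproper hdisj (Finset.nonempty_iff_ne_empty.2 h) hX.1)

/-- If the nonempty proper focal sets `B'_i ⊊ B` are pairwise distinct and pairwise
disjoint, then the Dempster combination `m` of their simple BBAs has no focal element
strictly inside any `B'_i`, so the credibility of each subbase equals its combined
mass: `Bel(B'_i) = m(B'_i)`. -/
theorem credibility_eq_mass_of_pairwise_disjoint
    {α ι : Type*} [DecidableEq α] [Fintype ι] [DecidableEq ι] [Nonempty ι]
    (B : Finset α) (B' : ι → Finset α)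
    (hne : ∀ i, (B' i).Nonempty) (hproper : ∀ i, B' i ⊂ B)
    (hdistinct : ∀ i j, i ≠ j → B' i ≠ B' j)
    (hdisj : ∀ i j, i ≠ j → B' i ∩ B' j = ∅)
    (a : ι → ℝ) (ha : ∀ i, 0 < a i ∧ a i < 1) (i : ι) :
    credibility (dempsterCombo B B' a) (B' i) = dempsterCombo B B' a (B' i) := by
  refine Finset.sum_eq_single_of_mem (B' i) ?_ fun X hX hne' => ?_
  · simpa using (hne i).ne_empty
  · have hsub : X ⊆ B' i := Finset.mem_powerset.1 (Finset.mem_filter.1 hX).1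
    exact dempsterCombo_eq_zero_of_ssubset hproper hdisj a (hsub.ssubset_of_ne hne')
end
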